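/- Let k be a field of characteristic zero, d a natural number, and A a commutative k-algebra (not assumed noetherian) such that the module of (d+1)-forms ⋀^{d+1}_A Ω_{A/k} = 0. Then every finite type k-subalgebra of A has Krull dimension at most d, and the Krull dimension of A itself is at most d. -/

import Mathlib

/-!
Two bounds meet in the transcendence degree of `A` over `k`.

If `p < q` are primes of `A`, lifts to `A ⧸ p` of a transcendence basis of `A ⧸ q`, together with
any nonzero element of `q / p`, are algebraically independent. So the transcendence degree of
`A ⧸ p` drops strictly along chains of primes, which gives `dim A ≤ trdeg A`. The same bound holds
for subalgebras, because `trdeg` is monotone along injections.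

Conversely, if `x₀, …, x_d ∈ A` are algebraically independent, they remain so in the residue field
`L` of some prime of `A`, because a minimal prime always lies in the image of `Spec` of an
injection. In characteristic zero `L` is formally smooth over `k[x₀, …, x_d]`, so the `dxᵢ` are
linearly independent in `Ω[L⁄k]`. Hence `dx₀ ∧ ⋯ ∧ dx_d` is nonzero over `L`, and a fortiori
over `A`.
-/

open Cardinal Function

theorem coheight_le_of_forall_lt_add_one_le {α : Type*} [Preorder α] {f : α → ℕ∞}
    (hf : ∀ ⦃a b⦄, a < b → f b + 1 ≤ f a) (a : α) : Order.coheight a ≤ f a := by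
  refine Order.coheight_le fun p hp ↦ ?_
  induction p using RelSeries.inductionOn generalizing a with
  | singleton x => simp
  | cons p x hx ih =>
    obtain rfl : x = a := by simpa using hp
    calc ((p.cons x hx).length : ℕ∞) = p.length + 1 := by simp
      _ ≤ f p.head + 1 := by gcongr; exact ih p.head rfl
      _ ≤ f x := hf hx

section TranscendenceDegree

variable {k D E : Type*} [CommRing k] [CommRing D] [IsDomain D] [CommRing E]
  [Algebra k D] [Algebra k E]

theorem algebraicIndependent_option_of_map_eq_zero {ι : Type*} (f : D →ₐ[k] E) {y : ι → D}
    (hy : AlgebraicIndependent k (f ∘ y)) {x : D} (hx : x ≠ 0) (hfx : f x = 0) :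
    AlgebraicIndependent k (fun o : Option ι ↦ o.elim x y) := by
  refine ((hy.of_comp f).option_iff_transcendental x).2 fun hx_alg ↦ ?_
  -- An algebraic `x` would put a nonzero element of `k[y]` into `ker f`.
  refine Ideal.comap_ne_bot_of_algebraic_mem (I := RingHom.ker f) hx hfx hx_alg ?_
  refine (Submodule.eq_bot_iff _).2 fun ⟨a, ha⟩ hfa ↦ Subtype.ext ?_
  rw [Algebra.adjoin_range_eq_range_aeval] at ha
  obtain ⟨F, rfl⟩ := ha
  have hF : MvPolynomial.aeval (f ∘ y) F = 0 :=
    (MvPolynomial.comp_aeval_apply _ f F).symm.trans hfa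
  simp [hy.eq_zero_of_aeval_eq_zero F hF]

theorem toENat_trdeg_add_one_le_of_surjective [IsDomain E] [FaithfulSMul k E]
    (f : D →ₐ[k] E) (hf : Surjective f) (hf' : ¬ Injective f) :
    toENat (Algebra.trdeg k E) + 1 ≤ toENat (Algebra.trdeg k D) := by
  have : Nontrivial k := (algebraMap k E).domain_nontrivial
  obtain ⟨x, hfx, hx⟩ : ∃ x, f x = 0 ∧ x ≠ 0 := by
    simpa [injective_iff_map_eq_zero] using hf'
  obtain ⟨ι, y, hy⟩ := exists_isTranscendenceBasis' k E
  obtain ⟨z, rfl⟩ := hf.comp_left y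
  rw [← hy.cardinalMk_eq_trdeg]
  simpa using toENat.monotone'
    (algebraicIndependent_option_of_map_eq_zero f hy.1 hx hfx).lift_cardinalMk_le_trdeg

end TranscendenceDegree

section KrullDimension

variable (k : Type*) {A : Type*} [Field k] [CommRing A] [Algebra k A]

theorem toENat_trdeg_quotient_add_one_le_of_lt {p q : Ideal A} [p.IsPrime] [q.IsPrime]
    (hpq : p < q) :
    toENat (Algebra.trdeg k (A ⧸ q)) + 1 ≤ toENat (Algebra.trdeg k (A ⧸ p)) := by
  refine toENat_trdeg_add_one_le_of_surjective (Ideal.Quotient.factorₐ k hpq.le)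
    (Ideal.Quotient.factor_surjective hpq.le) fun hinj ↦ hpq.not_ge fun x hx ↦ ?_
  rw [← Ideal.Quotient.eq_zero_iff_mem] at hx ⊢
  exact hinj (by simpa using hx)

variable (A) in
theorem ringKrullDim_le_toENat_trdeg : ringKrullDim A ≤ toENat (Algebra.trdeg k A) := by
  rw [ringKrullDim, Order.krullDim_eq_iSup_coheight]
  refine iSup_le fun p ↦ WithBot.coe_le_coe.2 ?_
  calc Order.coheight p ≤ toENat (Algebra.trdeg k (A ⧸ p.asIdeal)) :=
        coheight_le_of_forall_lt_add_one_le
          (f := fun q : PrimeSpectrum A ↦ toENat (Algebra.trdeg k (A ⧸ q.asIdeal)))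
          (fun _ _ hpq ↦ toENat_trdeg_quotient_add_one_le_of_lt k hpq) p
    _ ≤ toENat (Algebra.trdeg k A) :=
        toENat.monotone' (trdeg_le_of_surjective (Ideal.Quotient.mkₐ k p.asIdeal)
          (Ideal.Quotient.mkₐ_surjective k _))

end KrullDimension

theorem formallySmooth_of_charZero (K L : Type*) [Field K] [CharZero K] [Field L] [Algebra K L] :
    Algebra.FormallySmooth K L := by
  obtain ⟨ι, x, hx⟩ := exists_isTranscendenceBasis' K L
  have := hx.isAlgebraic_field
  exact .of_algebraicIndependent_of_isSeparable hx.1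

theorem formallySmooth_of_faithfulSMul (R L : Type*) [CommRing R] [IsDomain R] [CharZero R]
    [Field L] [Algebra R L] [FaithfulSMul R L] : Algebra.FormallySmooth R L := by
  let := FractionRing.liftAlgebra R L
  have : CharZero (FractionRing R) :=
    charZero_of_injective_algebraMap (IsFractionRing.injective R (FractionRing R))
  have : Algebra.FormallySmooth R (FractionRing R) := .of_isLocalization (nonZeroDivisors R)
  have := formallySmooth_of_charZero (FractionRing R) L
  exact .comp R (FractionRing R) L

theorem mapBaseChange_injective_of_subsingleton_h1Cotangent (R S T : Type*) [CommRing R]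
    [CommRing S] [CommRing T] [Algebra R S] [Algebra R T] [Algebra S T] [IsScalarTower R S T]
    [Subsingleton (Algebra.H1Cotangent S T)] :
    Injective (KaehlerDifferential.mapBaseChange R S T) := by
  refine (injective_iff_map_eq_zero _).2 fun a ha ↦ ?_
  obtain ⟨b, rfl⟩ := (Algebra.H1Cotangent.exact_δ_mapBaseChange R S T a).1 ha
  rw [Subsingleton.elim b 0, map_zero]

theorem linearIndependent_D_of_algebraicIndependent {k L ι : Type*} [CommRing k] [IsDomain k]
    [CharZero k] [Field L] [Algebra k L] {x : ι → L} (hx : AlgebraicIndependent k x) :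
    LinearIndependent L fun i ↦ KaehlerDifferential.D k L (x i) := by
  let := (MvPolynomial.aeval (R := k) x).toAlgebra
  have : IsScalarTower k (MvPolynomial ι k) L := .of_algHom (MvPolynomial.aeval x)
  have : FaithfulSMul (MvPolynomial ι k) L := (faithfulSMul_iff_algebraMap_injective _ _).2 hx
  have := formallySmooth_of_faithfulSMul (MvPolynomial ι k) L
  have hli := ((KaehlerDifferential.mvPolynomialBasis k ι).baseChange L).linearIndependent.map'
    (KaehlerDifferential.mapBaseChange k (MvPolynomial ι k) L)
    (LinearMap.ker_eq_bot.2 (mapBaseChange_injective_of_subsingleton_h1Cotangent ..))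
  convert! hli with i
  simp [RingHom.algebraMap_toAlgebra]

theorem ιMulti_ne_zero_of_linearIndependent {K V : Type*} [Field K] [AddCommGroup V] [Module K V]
    {n : ℕ} {v : Fin n → V} (hv : LinearIndependent K v) : exteriorPower.ιMulti K n v ≠ 0 := by
  let s := Set.powersetCard.ofFinEmbEquiv (RelEmbedding.refl (α := Fin n) (· ≤ ·))
  have hs := (exteriorPower.ιMulti_family_linearIndependent_field n hv).ne_zero s
  simpa [exteriorPower.ιMulti_family, s] using hs

theorem ιMulti_ne_zero_of_linearIndependent_comp {A L M V : Type*} [CommRing A] [Field L]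
    [Algebra A L] [AddCommGroup M] [Module A M] [AddCommGroup V] [Module A V] [Module L V]
    [IsScalarTower A L V] {n : ℕ} (f : M →ₗ[A] V) {v : Fin n → M}
    (hv : LinearIndependent L (f ∘ v)) : exteriorPower.ιMulti A n v ≠ 0 := by
  let wedge : V [⋀^Fin n]→ₗ[A] ⋀[L]^n V :=
    { (exteriorPower.ιMulti L n).toMultilinearMap.restrictScalars A with
      map_eq_zero_of_eq' := (exteriorPower.ιMulti L n).map_eq_zero_of_eq' }
  intro hv₀
  have hwedge : exteriorPower.ιMulti L n (f ∘ v) = 0 := by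
    calc exteriorPower.ιMulti L n (f ∘ v) = wedge.compLinearMap f v := rfl
      _ = exteriorPower.alternatingMapLinearEquiv (wedge.compLinearMap f)
            (exteriorPower.ιMulti A n v) :=
          (exteriorPower.alternatingMapLinearEquiv_apply_ιMulti _ v).symm
      _ = 0 := by rw [hv₀, map_zero]
  exact ιMulti_ne_zero_of_linearIndependent hv hwedge

section VanishingForms

variable {k A : Type*} [CommRing k] [IsDomain k] [CommRing A] [Algebra k A]

theorem exists_algebraicIndependent_residueField {ι : Type*} {x : ι → A}
    (hx : AlgebraicIndependent k x) :
    ∃ (p : Ideal A) (_ : p.IsPrime),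
      AlgebraicIndependent k (algebraMap A p.ResidueField ∘ x) := by
  obtain ⟨p, hp, hpx⟩ := Ideal.exists_comap_eq_of_mem_minimalPrimes_of_injective
    (f := (MvPolynomial.aeval x : MvPolynomial ι k →ₐ[k] A).toRingHom) hx ⊥
    (by simp [IsDomain.minimalPrimes_eq_singleton_bot])
  refine ⟨p, hp, algebraicIndependent_iff.2 fun F hF ↦ ?_⟩
  have hFp : MvPolynomial.aeval x F ∈ p := Ideal.algebraMap_residueField_eq_zero.1 <|
    (MvPolynomial.comp_aeval_apply _ (IsScalarTower.toAlgHom k A p.ResidueField) F).trans hF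
  exact hpx.le hFp

variable [CharZero k]

theorem ιMulti_D_ne_zero_of_algebraicIndependent {n : ℕ} {x : Fin n → A}
    (hx : AlgebraicIndependent k x) :
    exteriorPower.ιMulti A n (fun i ↦ KaehlerDifferential.D k A (x i)) ≠ 0 := by
  obtain ⟨p, _, hp⟩ := exists_algebraicIndependent_residueField hx
  apply ιMulti_ne_zero_of_linearIndependent_comp (L := p.ResidueField)
    (KaehlerDifferential.map k k A p.ResidueField)
  simpa [comp_def] using linearIndependent_D_of_algebraicIndependent hp

theorem trdeg_le_of_subsingleton_exteriorPower {d : ℕ}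
    (h : Subsingleton (⋀[A]^(d + 1) (Ω[A⁄k]))) : Algebra.trdeg k A ≤ d := by
  have card_le (s : Finset A) (hs : AlgebraicIndependent k ((↑) : s → A)) : s.card ≤ d := by
    by_contra! hds
    have hds' : AlgebraicIndependent k fun i : Fin (d + 1) ↦ (s.equivFin.symm (i.castLE hds) : A) :=
      hs.comp _ (s.equivFin.symm.injective.comp (Fin.castLE_injective hds))
    exact ιMulti_D_ne_zero_of_algebraicIndependent hds' (Subsingleton.elim _ _)
  exact ciSup_le' fun s ↦
    algebraicIndependent_bounded_of_finset_algebraicIndependent_bounded card_le s.1 s.2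

end VanishingForms

theorem krull_dimension_le_of_vanishing_forms_general {k A B : Type*} [Field k] [CharZero k]
    [CommRing A] [Algebra k A] [CommRing B] [Algebra k B] {d : ℕ}
    (h : Subsingleton (⋀[A]^(d + 1) (Ω[A⁄k]))) (f : B →ₐ[k] A) (hf : Injective f) :
    ringKrullDim B ≤ d := by
  have htrdeg : toENat (Algebra.trdeg k B) ≤ d := by
    calc toENat (Algebra.trdeg k B) ≤ toENat (Algebra.trdeg k A) := by
          simpa using toENat.monotone' (lift_trdeg_le_of_injective f hf)
      _ ≤ d := toENat_le_natCast.2 (trdeg_le_of_subsingleton_exteriorPower h)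
  exact (ringKrullDim_le_toENat_trdeg k B).trans (mod_cast htrdeg)

/-- Let `k` be a field of characteristic zero and `A` a commutative `k`-algebra (not
assumed noetherian) with `⋀^{d+1}_A Ω_{A/k} = 0`. Then every finite type `k`-subalgebra of
`A` has Krull dimension at most `d`, and the Krull dimension of `A` is at most `d`. -/
theorem krull_dimension_le_of_vanishing_forms
    (k A : Type*) [Field k] [CharZero k] [CommRing A] [Algebra k A] (d : ℕ)
    (h : Subsingleton (⋀[A]^(d + 1) (Ω[A⁄k]))) :
    (∀ B : Subalgebra k A, B.FG → ringKrullDim B ≤ d) ∧ ringKrullDim A ≤ d :=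
  ⟨fun B _ ↦ krull_dimension_le_of_vanishing_forms_general h B.val Subtype.val_injective,
    krull_dimension_le_of_vanishing_forms_general h (AlgHom.id k A) injective_id⟩
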